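/- The k-linear map ρ : T_rt → T_rt ⊗ T_rt defined on a rooted tree T by ρ(T) = Σ_{e ∈ E(T)} T_e^1 ⊗ T_e^2 is a (left) pre-Lie comultiplication on T_rt. -/

import Mathlib

/-!
Statement 1: the map `ρ(T) = Σ_{e ∈ E(T)} T_e^1 ⊗ T_e^2` is a (left) pre-Lie
comultiplication on the free `k`-module `T_rt` with basis the isomorphism classes of
rooted trees.
-/

open TensorProduct

noncomputable section

section PreLie

variable (k : Type*) [CommRing k] (g : Type*) [AddCommGroup g] [Module k g]

/-- `τ_{(12)}` on the triple tensor product `g ⊗ (g ⊗ g)`: `x⊗y⊗z ↦ y⊗x⊗z`. -/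
def tau12 : g ⊗[k] (g ⊗[k] g) →ₗ[k] g ⊗[k] (g ⊗[k] g) :=
  (TensorProduct.assoc k g g g).toLinearMap ∘ₗ
    (LinearMap.rTensor g (TensorProduct.comm k g g).toLinearMap) ∘ₗ
    (TensorProduct.assoc k g g g).symm.toLinearMap

variable {k g}

/-- `δ₀ : g → g ⊗ g` is a (left) pre-Lie comultiplication if
`(Id − τ_{(12)}) ∘ (δ₀ ⊗ Id − Id ⊗ δ₀) ∘ δ₀ = 0`. -/
def IsPreLieComul (δ : g →ₗ[k] g ⊗[k] g) : Prop :=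
  (LinearMap.id - tau12 k g) ∘ₗ
      (((TensorProduct.assoc k g g g).toLinearMap ∘ₗ LinearMap.rTensor g δ)
        - LinearMap.lTensor g δ) ∘ₗ δ = 0

end PreLie

/-- The sum of a list of elements of an additive commutative monoid. -/
def lsum {M : Type*} [AddCommMonoid M] (l : List M) : M := l.foldr (· + ·) 0

/-- Planar rooted trees (a rooted tree together with an ordering of the children of each
vertex; these orderings are forgotten upon passing to the quotient `RTree` below). -/
inductive PTree : Type
  | node : List PTree → PTree

mutual
/-- All one-edge cuts of a rooted tree: for each edge `e` of `T`, the pair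
`(T_e^1, T_e^2)` obtained by deleting `e`, where `T_e^2` is the component containing the
root of `T` (rooted at the root of `T`) and `T_e^1` is the other component (rooted at its
vertex which was incident to `e`). -/
def PTree.cuts : PTree → List (PTree × PTree)
  | .node l => (PTree.cutsL l).map (fun p => (p.1, .node p.2))
/-- Auxiliary to `PTree.cuts`: all cuts of a forest. -/
def PTree.cutsL : List PTree → List (PTree × List PTree)
  | [] => []
  | t :: ts =>
      ((t, ts) :: (PTree.cuts t).map (fun p => (p.1, p.2 :: ts)))
        ++ (PTree.cutsL ts).map (fun p => (p.1, t :: p.2))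
end

/-- Two planar rooted trees are equivalent iff they are isomorphic as rooted trees,
i.e. one is obtained from the other by permuting the children of each vertex. -/
inductive PTree.Equiv : PTree → PTree → Prop
  | node {l l₂ l' : List PTree} : List.Forall₂ PTree.Equiv l l₂ → l₂.Perm l' →
      PTree.Equiv (.node l) (.node l')

/-- Isomorphism classes of rooted trees. -/
def RTree : Type := Quot PTree.Equiv

variable (k : Type*) [CommRing k]

/-- `T_rt`: the free `k`-module with basis the isomorphism classes of rooted trees. -/
abbrev Trt := RTree →₀ k

/-- The pre-Lie comultiplication `ρ(T) = Σ_{e ∈ E(T)} T_e^1 ⊗ T_e^2` of Connes-Kreimer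
(defined on an isomorphism class via a representative; the result does not depend on this
choice). -/
def rho : Trt k →ₗ[k] Trt k ⊗[k] Trt k :=
  Finsupp.lift (Trt k ⊗[k] Trt k) k RTree fun q =>
    lsum ((PTree.cuts q.out).map fun p =>
      (Finsupp.single (Quot.mk PTree.Equiv p.1) (1 : k)) ⊗ₜ[k]
        (Finsupp.single (Quot.mk PTree.Equiv p.2) (1 : k)))

/-!
Let `t ∘ s` be the tree obtained by joining the root of `t` to the root of `s`, the latter being the
new root. Every rooted tree arises from the one-vertex tree by iterating `∘`. An edge of `t ∘ s` is
the new edge, an edge of `t` or an edge of `s`, so in Sweedler notation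
`ρ(t ∘ s) = t ⊗ s + t₁ ⊗ (t₂ ∘ s) + s₁ ⊗ (t ∘ s₂)`.
Applying this rule twice, `(ρ ⊗ Id - Id ⊗ ρ) ρ` sends `t ∘ s` to the sum of its values at `t` and
`s`, transported by `Id ⊗ Id ⊗ (- ∘ s)` and `Id ⊗ Id ⊗ (t ∘ -)`, minus
`t ⊗ s₁ ⊗ s₂ + s₁ ⊗ t ⊗ s₂ + t₁ ⊗ s₁ ⊗ (t₂ ∘ s₂) + s₁ ⊗ t₁ ⊗ (t₂ ∘ s₂)`.
Symmetry in the first two factors therefore passes from `t` and `s` to `t ∘ s`.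

On planar trees the rule determines the cuts recursively. They depend only on the isomorphism class
because `t ∘ (s ∘ u)` and `s ∘ (t ∘ u)` have the same cuts up to isomorphism.
-/

section CutRule

open LinearMap (lTensor rTensor lTensor_tmul rTensor_tmul lTensor_add lTensor_smul)

variable {k} {g : Type*} [AddCommGroup g] [Module k g]

theorem tau12_tmul (x y z : g) : tau12 k g (x ⊗ₜ (y ⊗ₜ z)) = y ⊗ₜ (x ⊗ₜ z) := by
  simp [tau12]

theorem tau12_tau12 (w : g ⊗[k] (g ⊗[k] g)) : tau12 k g (tau12 k g w) = w := by
  have h : tau12 k g ∘ₗ tau12 k g = LinearMap.id := by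
    ext x y z
    simp [tau12_tmul]
  exact LinearMap.congr_fun h w

theorem tau12_lTensor_lTensor (f : g →ₗ[k] g) (w : g ⊗[k] (g ⊗[k] g)) :
    tau12 k g (lTensor g (lTensor g f) w) = lTensor g (lTensor g f) (tau12 k g w) := by
  have h : tau12 k g ∘ₗ lTensor g (lTensor g f) = lTensor g (lTensor g f) ∘ₗ tau12 k g := by
    ext x y z
    simp [tau12_tmul]
  exact LinearMap.congr_fun h w

/-- The coassociator `(δ ⊗ Id - Id ⊗ δ) ∘ δ` of a comultiplication `δ`. -/
def coassociator (δ : g →ₗ[k] g ⊗[k] g) : g →ₗ[k] g ⊗[k] (g ⊗[k] g) :=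
  ((TensorProduct.assoc k g g g).toLinearMap ∘ₗ rTensor g δ - lTensor g δ) ∘ₗ δ

theorem coassociator_apply (δ : g →ₗ[k] g ⊗[k] g) (x : g) :
    coassociator δ x =
      TensorProduct.assoc k g g g (rTensor g δ (δ x)) - lTensor g δ (δ x) := rfl

theorem isPreLieComul_iff (δ : g →ₗ[k] g ⊗[k] g) :
    IsPreLieComul δ ↔ tau12 k g ∘ₗ coassociator δ = coassociator δ := by
  rw [IsPreLieComul, ← coassociator, LinearMap.sub_comp, LinearMap.id_comp, sub_eq_zero, eq_comm]

theorem assoc_rTensor_lTensor {A B C D E : Type*} [AddCommMonoid A] [AddCommMonoid B]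
    [AddCommMonoid C] [AddCommMonoid D] [AddCommMonoid E] [Module k A] [Module k B] [Module k C]
    [Module k D] [Module k E] (δ : A →ₗ[k] B ⊗[k] C) (f : D →ₗ[k] E) (u : A ⊗[k] D) :
    TensorProduct.assoc k B C E (rTensor E δ (lTensor A f u)) =
      lTensor B (lTensor C f) (TensorProduct.assoc k B C D (rTensor D δ u)) := by
  have h : rTensor E δ ∘ₗ lTensor A f = lTensor (B ⊗[k] C) f ∘ₗ rTensor D δ := by
    rw [LinearMap.rTensor_comp_lTensor, LinearMap.lTensor_comp_rTensor]
  rw [← LinearMap.comp_apply (rTensor E δ), h, LinearMap.lTensor_tensor]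
  simp

/-- The map `(a ⊗ b) ⊗ (c ⊗ d) ↦ a ⊗ c ⊗ (b ∘ d)` for a bilinear product `∘` on `g`. On cuts
`a ⊗ b` of `t` and `c ⊗ d` of `s` it makes both cuts in `t ∘ s`. -/
def mulTrunks (m : g →ₗ[k] g →ₗ[k] g) : (g ⊗[k] g) ⊗[k] (g ⊗[k] g) →ₗ[k] g ⊗[k] (g ⊗[k] g) :=
  (TensorProduct.assoc k g g g).toLinearMap ∘ₗ lTensor (g ⊗[k] g) (TensorProduct.lift m) ∘ₗ
    (TensorProduct.tensorTensorTensorComm k g g g g).toLinearMap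

theorem mulTrunks_tmul_left (m : g →ₗ[k] g →ₗ[k] g) (a b : g) (v : g ⊗[k] g) :
    mulTrunks m ((a ⊗ₜ b) ⊗ₜ v) = a ⊗ₜ lTensor g (m b) v := by
  induction v with
  | zero => simp
  | tmul c d => simp [mulTrunks]
  | add v w hv hw => simp only [TensorProduct.tmul_add, map_add, hv, hw]

theorem tau12_mulTrunks_tmul_right (m : g →ₗ[k] g →ₗ[k] g) (u : g ⊗[k] g) (c d : g) :
    tau12 k g (mulTrunks m (u ⊗ₜ (c ⊗ₜ d))) = c ⊗ₜ lTensor g (m.flip d) u := by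
  induction u with
  | zero => simp
  | tmul a b => simp [mulTrunks, tau12_tmul]
  | add u w hu hw => simp only [TensorProduct.add_tmul, TensorProduct.tmul_add, map_add, hu, hw]

/-- The rule `δ(x ∘ y) = x ⊗ y + x₁ ⊗ (x₂ ∘ y) + y₁ ⊗ (x ∘ y₂)` relating a bilinear product
`x ∘ y = m x y` to a comultiplication `δ`, where `δ x = x₁ ⊗ x₂` in Sweedler notation. -/
def SatisfiesCutRule (m : g →ₗ[k] g →ₗ[k] g) (δ : g →ₗ[k] g ⊗[k] g) : Prop :=
  ∀ x y, δ (m x y) = x ⊗ₜ y + lTensor g (m.flip y) (δ x) + lTensor g (m x) (δ y)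

namespace SatisfiesCutRule

variable {m : g →ₗ[k] g →ₗ[k] g} {δ : g →ₗ[k] g ⊗[k] g}

theorem of_span_eq_top {S : Set g} (hS : Submodule.span k S = ⊤)
    (h : ∀ x ∈ S, ∀ y ∈ S,
      δ (m x y) = x ⊗ₜ y + lTensor g (m.flip y) (δ x) + lTensor g (m x) (δ y)) :
    SatisfiesCutRule m δ := by
  intro x y
  have hx : x ∈ Submodule.span k S := hS ▸ Submodule.mem_top
  have hy : y ∈ Submodule.span k S := hS ▸ Submodule.mem_top
  induction hx, hy using Submodule.span_induction₂ with
  | mem_mem x y hx hy => exact h x hx y hy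
  | zero_left | zero_right => simp
  | add_left x x' y _ _ _ hx hx' =>
    simp only [map_add, LinearMap.add_apply, lTensor_add, TensorProduct.add_tmul, hx, hx']
    abel
  | add_right x y y' _ _ _ hy hy' =>
    simp only [map_add, LinearMap.add_apply, lTensor_add, TensorProduct.tmul_add, hy, hy']
    abel
  | smul_left c x y _ _ hx =>
    simp only [map_smul, LinearMap.smul_apply, lTensor_smul, ← TensorProduct.smul_tmul', hx,
      smul_add]
  | smul_right c x y _ _ hy =>
    simp only [map_smul, LinearMap.smul_apply, lTensor_smul, TensorProduct.tmul_smul, hy, smul_add]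

theorem lTensor_lTensor_flip (h : SatisfiesCutRule m δ) (u : g ⊗[k] g) (y : g) :
    lTensor g δ (lTensor g (m.flip y) u) =
      TensorProduct.assoc k g g g (u ⊗ₜ y) + lTensor g (lTensor g (m.flip y)) (lTensor g δ u) +
        mulTrunks m (u ⊗ₜ δ y) := by
  induction u with
  | zero => simp
  | tmul a b =>
    simp only [lTensor_tmul, LinearMap.flip_apply, h b y, TensorProduct.tmul_add,
      TensorProduct.assoc_tmul, mulTrunks_tmul_left]
  | add u w hu hw =>
    simp only [map_add, TensorProduct.add_tmul, hu, hw]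
    abel

theorem lTensor_lTensor (h : SatisfiesCutRule m δ) (x : g) (v : g ⊗[k] g) :
    lTensor g δ (lTensor g (m x) v) =
      tau12 k g (x ⊗ₜ v) + tau12 k g (mulTrunks m (δ x ⊗ₜ v)) +
        lTensor g (lTensor g (m x)) (lTensor g δ v) := by
  induction v with
  | zero => simp
  | tmul c d =>
    simp only [lTensor_tmul, h x d, TensorProduct.tmul_add, tau12_tmul, tau12_mulTrunks_tmul_right]
  | add v w hv hw =>
    simp only [map_add, TensorProduct.tmul_add, hv, hw]
    abel

theorem coassociator_mul (h : SatisfiesCutRule m δ) (x y : g) :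
    coassociator δ (m x y) =
      lTensor g (lTensor g (m.flip y)) (coassociator δ x) +
        lTensor g (lTensor g (m x)) (coassociator δ y) -
      (x ⊗ₜ δ y + tau12 k g (x ⊗ₜ δ y)) -
      (mulTrunks m (δ x ⊗ₜ δ y) + tau12 k g (mulTrunks m (δ x ⊗ₜ δ y))) := by
  simp only [coassociator_apply, h x y, map_add, map_sub, rTensor_tmul, lTensor_tmul,
    assoc_rTensor_lTensor, h.lTensor_lTensor_flip, h.lTensor_lTensor]
  abel

theorem tau12_coassociator_mul (h : SatisfiesCutRule m δ) {x y : g}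
    (hx : tau12 k g (coassociator δ x) = coassociator δ x)
    (hy : tau12 k g (coassociator δ y) = coassociator δ y) :
    tau12 k g (coassociator δ (m x y)) = coassociator δ (m x y) := by
  simp only [h.coassociator_mul, map_sub, map_add, tau12_lTensor_lTensor, tau12_tau12, hx, hy]
  abel

end SatisfiesCutRule

end CutRule

namespace PTree

/-- The planar tree `t ∘ s`: `t` becomes the first branch at the root of `s`. -/
def graft (t : PTree) : PTree → PTree
  | node l => node (t :: l)

theorem graft_induction {motive : PTree → Prop} (leaf : motive (node []))
    (graft : ∀ t s, motive t → motive s → motive (graft t s)) (t : PTree) : motive t :=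
  PTree.rec (motive_1 := motive) (motive_2 := fun l => motive (node l))
    (fun _ h => h) leaf (fun t l ht hl => graft t (node l) ht hl) t

theorem cuts_graft (t s : PTree) :
    cuts (graft t s) =
      (t, s) :: ((cuts t).map fun p => (p.1, graft p.2 s)) ++
        (cuts s).map fun p => (p.1, graft t p.2) := by
  cases s
  simp [graft, cuts, cutsL, Function.comp_def]

theorem Equiv.graft {t t' s s' : PTree} (ht : Equiv t t') (hs : Equiv s s') :
    Equiv (graft t s) (graft t' s') := by
  obtain ⟨hl, hp⟩ := hs
  exact .node (.cons ht hl) (hp.cons t')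

theorem Equiv.refl (t : PTree) : Equiv t t := by
  induction t using graft_induction with
  | leaf => exact .node .nil .nil
  | graft t s ht hs => exact ht.graft hs

theorem Equiv.of_perm {l l' : List PTree} (h : l.Perm l') :
    Equiv (PTree.node l) (PTree.node l') :=
  .node (List.forall₂_same.2 fun t _ => .refl t) h

end PTree

namespace RTree

/-- The isomorphism class of a planar rooted tree. -/
def mk (t : PTree) : RTree := Quot.mk PTree.Equiv t

/-- The rooted tree `t ∘ s`: the root of `t` is joined by an edge to the root of `s`, which is the
root of the result. -/
def graft : RTree → RTree → RTree :=
  Quot.map₂ PTree.graft (fun t _ _ hs => (PTree.Equiv.refl t).graft hs)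
    fun _ _ s ht => ht.graft (.refl s)

theorem mk_graft (t s : PTree) : mk (t.graft s) = (mk t).graft (mk s) := rfl

theorem graft_left_comm (t s u : RTree) : t.graft (s.graft u) = s.graft (t.graft u) := by
  obtain ⟨t⟩ := t
  obtain ⟨s⟩ := s
  obtain ⟨⟨l⟩⟩ := u
  exact Quot.sound (.of_perm (.swap s t l))

theorem graft_induction {motive : RTree → Prop} (leaf : motive (mk (.node [])))
    (graft : ∀ t s, motive t → motive s → motive (graft t s)) (q : RTree) : motive q := by
  obtain ⟨t⟩ := q
  induction t using PTree.graft_induction with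
  | leaf => exact leaf
  | graft t s ht hs => exact graft (mk t) (mk s) ht hs

end RTree

namespace PTree

open RTree (mk mk_graft)

/-- The one-edge cuts of a planar tree with both components taken up to isomorphism. -/
def isoCuts (t : PTree) : Multiset (RTree × RTree) :=
  (cuts t : Multiset (PTree × PTree)).map fun p => (mk p.1, mk p.2)

theorem isoCuts_leaf : isoCuts (node []) = 0 := by
  simp [isoCuts, cuts, cutsL]

theorem isoCuts_graft (t s : PTree) :
    isoCuts (graft t s) =
      (mk t, mk s) ::ₘ ((isoCuts t).map (fun p => (p.1, p.2.graft (mk s))) +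
        (isoCuts s).map fun p => (p.1, (mk t).graft p.2)) := by
  simp [isoCuts, cuts_graft, mk_graft, Function.comp_def]

theorem isoCuts_graft_congr {t t' s s' : PTree} (ht : Equiv t t') (hs : Equiv s s')
    (ht' : isoCuts t = isoCuts t') (hs' : isoCuts s = isoCuts s') :
    isoCuts (graft t s) = isoCuts (graft t' s') := by
  have hmt : mk t = mk t' := Quot.sound ht
  have hms : mk s = mk s' := Quot.sound hs
  rw [isoCuts_graft, isoCuts_graft, hmt, hms, ht', hs']

theorem isoCuts_graft_left_comm (t s u : PTree) :
    isoCuts (graft t (graft s u)) = isoCuts (graft s (graft t u)) := by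
  simp only [isoCuts_graft, mk_graft, Multiset.map_cons, Multiset.map_add, Multiset.map_map,
    Function.comp_def, RTree.graft_left_comm _ (mk s), RTree.graft_left_comm _ (mk t) (mk u)]
  simp only [← Multiset.singleton_add]
  abel

theorem isoCuts_node_of_perm {l l' : List PTree} (h : l.Perm l') :
    isoCuts (node l) = isoCuts (node l') := by
  induction h with
  | nil => rfl
  | cons t h ih => exact isoCuts_graft_congr (.refl t) (.of_perm h) rfl ih
  | swap t s l => exact isoCuts_graft_left_comm s t (node l)
  | trans _ _ ih₁ ih₂ => exact ih₁.trans ih₂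

theorem Equiv.isoCuts_eq {t t' : PTree} (h : Equiv t t') : isoCuts t = isoCuts t' := by
  induction t using graft_induction generalizing t' with
  | leaf =>
    obtain ⟨⟨⟩, hp⟩ := h
    exact isoCuts_node_of_perm hp
  | graft t s iht ihs =>
    obtain ⟨l⟩ := s
    obtain ⟨_ | ⟨ht, hl⟩, hp⟩ := h
    have hs := Equiv.node hl (.refl _)
    exact (isoCuts_graft_congr ht hs (iht ht) (ihs hs)).trans (isoCuts_node_of_perm hp)

end PTree

namespace RTree

/-- The multiset of pairs `(T_e^1, T_e^2)`, where `e` runs over the edges of a rooted tree `T`. -/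
def cuts : RTree → Multiset (RTree × RTree) :=
  Quot.lift PTree.isoCuts fun _ _ => PTree.Equiv.isoCuts_eq

theorem cuts_leaf : cuts (mk (.node [])) = 0 := PTree.isoCuts_leaf

theorem cuts_graft (t s : RTree) :
    cuts (graft t s) =
      (t, s) ::ₘ (t.cuts.map (fun p => (p.1, p.2.graft s)) +
        s.cuts.map fun p => (p.1, t.graft p.2)) := by
  obtain ⟨t⟩ := t
  obtain ⟨s⟩ := s
  exact PTree.isoCuts_graft t s

end RTree

theorem lsum_eq_sum {M : Type*} [AddCommMonoid M] (l : List M) : lsum l = l.sum := rfl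

open Finsupp (single)

namespace Trt

/-- The bilinear extension of grafting to `T_rt`. -/
def graft : Trt k →ₗ[k] Trt k →ₗ[k] Trt k :=
  Finsupp.lift _ k RTree fun t => Finsupp.lmapDomain k k (RTree.graft t)

theorem graft_single (t s : RTree) (a b : k) :
    graft k (single t a) (single s b) = single (t.graft s) (a * b) := by
  simp [graft]

end Trt

theorem rho_single (q : RTree) :
    rho k (single q 1) = (q.cuts.map fun p => single p.1 (1 : k) ⊗ₜ[k] single p.2 (1 : k)).sum := by
  have hq : q.cuts = PTree.isoCuts q.out := congrArg RTree.cuts (Quot.out_eq q).symm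
  rw [hq, PTree.isoCuts, Multiset.map_map, Multiset.map_coe, Multiset.sum_coe, ← lsum_eq_sum, rho,
    Finsupp.lift_apply]
  refine (Finsupp.sum_single_index ?_).trans ?_
  · exact zero_smul k _
  · exact one_smul k _

theorem satisfiesCutRule_rho : SatisfiesCutRule (Trt.graft k) (rho k) := by
  have span_single : Submodule.span k (Set.range fun q : RTree => single q (1 : k)) = ⊤ := by
    simpa using (Finsupp.basisSingleOne (R := k) (ι := RTree)).span_eq
  refine .of_span_eq_top span_single ?_
  rintro _ ⟨t, rfl⟩ _ ⟨s, rfl⟩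
  simp only [Trt.graft_single, rho_single, RTree.cuts_graft, mul_one, Multiset.map_cons,
    Multiset.map_add, Multiset.map_map, Multiset.sum_cons, Multiset.sum_add, map_multiset_sum,
    Function.comp_def, LinearMap.lTensor_tmul, LinearMap.flip_apply, add_assoc]

theorem tau12_coassociator_rho_single (q : RTree) :
    tau12 k _ (coassociator (rho k) (single q 1)) = coassociator (rho k) (single q 1) := by
  induction q using RTree.graft_induction with
  | leaf => simp [coassociator_apply, rho_single, RTree.cuts_leaf]
  | graft t s ht hs =>
    simpa only [Trt.graft_single, mul_one] using
      (satisfiesCutRule_rho k).tau12_coassociator_mul ht hs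

/-- `ρ` is a (left) pre-Lie comultiplication on `T_rt`. -/
theorem rho_isPreLieComul : IsPreLieComul (rho k) := by
  refine (isPreLieComul_iff _).2 (Finsupp.lhom_ext' fun q => LinearMap.ext_ring ?_)
  exact tau12_coassociator_rho_single k q

end
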